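/- Let Γ^{sb} = (K, I, q, g) be a commutative state-blind POMDP with K and I finite and nonempty. Then for every initial probability p₁ ∈ Δ(K) there exist a real number v and a pure strategy a ∈ I^ℕ such that lim_{n→∞} γ_n(p₁, a) = v and limsup_{n→∞} sup_{a' ∈ I^ℕ} γ_n(p₁, a') ≤ v; in particular Γ^{sb}(p₁) has uniform value v and a is a pure 0-optimal strategy. -/

import Mathlib

open Filter Topology

noncomputable section

/-- The affine extension of a transition `q : K → I → Δ(K)` to beliefs `p : K → ℝ`. -/
def qTilde1 {K I : Type*} [Fintype K] (q : K → I → K → ℝ) (p : K → ℝ) (i : I) : K → ℝ :=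
  fun k' => ∑ k : K, p k * q k i k'

/-- The belief process induced by a pure strategy `a` from the initial belief `p₁`:
`p_{t+1} = q̃(p_t, a_t)`. -/
def beliefPlay {K I : Type*} [Fintype K] (q : K → I → K → ℝ) (p₁ : K → ℝ) (a : ℕ → I) :
    ℕ → (K → ℝ)
  | 0 => p₁
  | t + 1 => qTilde1 q (beliefPlay q p₁ a t) (a t)

/-- The `n`-stage expected average payoff `γ_n(p₁, a)` of the state-blind POMDP. -/
def pomdpPayoff {K I : Type*} [Fintype K] (q : K → I → K → ℝ) (g : K → I → ℝ)
    (p₁ : K → ℝ) (a : ℕ → I) (n : ℕ) : ℝ :=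
  (1 / (n : ℝ)) * ∑ t ∈ Finset.range n, ∑ k : K, beliefPlay q p₁ a t k * g k (a t)

/-!
Let `A i` be the transition matrix of the action `i`, so that a word `w` moves the belief from `p₁`
to `p₁ ᵥ* (w.map A).prod`. The matrices generate a compact commutative monoid `S` of stochastic
matrices, on which the payoffs are continuous functions.

*Power limits.* The closure of the powers of a stochastic matrix `T` contains an idempotent `T * B`
with `B` in that closure. `T` and `B` restrict to mutually inverse maps of the polytope
`Δ(K) ᵥ* (T * B)`, so `T` permutes its finitely many extreme points and `T ^ (N * n)` converges for
some `N > 0`. One `N` serves all actions; let `P i` be the limit of `A i ^ (N * n)`. Each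
`e_J = ∏ j ∈ J, P j` is idempotent, `A j ^ N` fixes it for `j ∈ J`, and every limit of words is
`e_J * m` for some set `J` of actions and some word `m`.

*The value.* By compactness, among the cycles `x * c = x` with `x` a limit of words and
`c` nonempty of length at most `N ^ |I|`, one has the largest average reward. Call it `v`, and
subtract it from all rewards, so that short cycles have nonpositive reward.

*Upper bound.* Starting from a state fixed by `e_J`, a word in `J` longer than `N ^ |I|` has, by
pigeonhole on the letter counts modulo `N`, a short factor that is a cycle and can be removed
without decreasing the reward; hence its reward is bounded. Once every letter of `w` has been
played often, the current state is uniformly close to its multiple by `e_J`, where `J` is the set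
of letters of `w`. A letter not yet played often can appear only boundedly many times, so every
word `w` has reward at most `C + ε * |w|`.

*Optimal strategy.* Let `x = e_J * m` be the base of the best cycle `c`. Play `m` and then repeat
`c`, replacing it at the sparse times given by the perfect squares by a word `u` that fixes `x` and
contains all letters of `J`. The letters of `J` are then played infinitely often, so the true state
merges with the ideal one, which runs along the cycle through `x`.
-/

section CompactMonoid

variable {S : Type*} [Monoid S] [TopologicalSpace S] [ContinuousMul S] [T2Space S]

lemma commute_of_mem_topologicalClosure_powers {T x : S}
    (hx : x ∈ (Submonoid.powers T).topologicalClosure) : Commute T x := by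
  refine closure_minimal (t := {x | T * x = x * T}) ?_ (isClosed_eq (by fun_prop) (by fun_prop)) hx
  rintro _ ⟨n, rfl⟩
  exact (Commute.self_pow T n).eq

variable [CompactSpace S]

lemma isClosed_setOf_dvd (b : S) : IsClosed {x : S | x ∣ b} := by
  have : {x : S | x ∣ b} = Prod.fst '' {p : S × S | b = p.1 * p.2} := by
    ext x
    simp [Dvd.dvd]
  rw [this]
  exact isClosedMap_fst_of_compactSpace _
    (isClosed_eq continuous_const (continuous_fst.mul continuous_snd))

lemma isClosed_setOf_dvd' (a : S) : IsClosed {x : S | a ∣ x} := by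
  convert (isCompact_range (continuous_const_mul a)).isClosed using 1
  ext x
  exact exists_congr fun c => eq_comm

lemma exists_isIdempotentElem_mul_mem_closure_powers (T : S) :
    ∃ B ∈ (Submonoid.powers T).topologicalClosure, IsIdempotentElem (T * B) := by
  set C := (Submonoid.powers T).topologicalClosure
  have hT : T ∈ C := Submonoid.le_topologicalClosure _ (Submonoid.mem_powers T)
  have hcompact : IsCompact ((T * ·) '' (C : Set S)) :=
    (Submonoid.isClosed_topologicalClosure _).isCompact.image (continuous_const_mul T)
  obtain ⟨_, ⟨B, hB, rfl⟩, hidem⟩ := exists_idempotent_in_compact_subsemigroup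
    (fun x => continuous_mul_const x) ((T * ·) '' (C : Set S))
    ⟨T * 1, 1, C.one_mem, rfl⟩ hcompact (by
      rintro _ ⟨x, hx, rfl⟩ _ ⟨y, hy, rfl⟩
      exact ⟨x * (T * y), C.mul_mem hx (C.mul_mem hT hy), (mul_assoc _ _ _).symm⟩)
  exact ⟨B, hB, hidem⟩

lemma mul_pow_mul_eq_self {M : Type*} [Monoid M] {P T : M} {N : ℕ} (h : P * T ^ N = P) (n : ℕ) :
    P * T ^ (N * n) = P := by
  induction n with
  | zero => simp
  | succ n ih => rw [Nat.mul_succ, pow_add, ← mul_assoc, ih, h]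

lemma tendsto_pow_mul_of_isIdempotentElem {T P : S} {N : ℕ} (hN : 0 < N)
    (hidem : IsIdempotentElem P) (hP : P ∈ (Submonoid.powers T).topologicalClosure)
    (hPT : P * T ^ N = P) : Tendsto (fun n => T ^ (N * n)) atTop (𝓝 P) := by
  refine tendsto_nhds_of_unique_mapClusterPt fun B hB => ?_
  have mem_of_eventually {C : Set S} (hC : IsClosed C) (h : ∀ᶠ n in atTop, T ^ (N * n) ∈ C) :
      B ∈ C :=
    hC.closure_subset (mem_closure_iff_clusterPt.2 (ClusterPt.mono hB (le_principal_iff.2 h)))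
  have hPB : P * B = P :=
    mem_of_eventually (C := {x | P * x = P}) (isClosed_eq (by fun_prop) continuous_const)
      (.of_forall (mul_pow_mul_eq_self hPT))
  have pow_dvd (n : ℕ) : T ^ n ∣ B := by
    refine mem_of_eventually (isClosed_setOf_dvd' (T ^ n)) ?_
    filter_upwards [eventually_ge_atTop n] with k hk
    exact pow_dvd_pow T (hk.trans (Nat.le_mul_of_pos_left k hN))
  obtain ⟨y, rfl⟩ : P ∣ B :=
    closure_minimal (by rintro _ ⟨n, rfl⟩; exact pow_dvd n) (isClosed_setOf_dvd B) hP
  rwa [← mul_assoc, hidem.eq] at hPB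

end CompactMonoid

section ExtremePoints

variable {E : Type*} [AddCommGroup E] [Module ℝ E] {D : Set E}

lemma mapsTo_extremePoints {f g : E →ₗ[ℝ] E} (hf : Set.MapsTo f D D) (hg : Set.MapsTo g D D)
    (hgf : Set.LeftInvOn g f D) (hfg : Set.LeftInvOn f g D) :
    Set.MapsTo f (D.extremePoints ℝ) (D.extremePoints ℝ) := by
  intro e he
  rw [mem_extremePoints_iff_left] at he ⊢
  refine ⟨hf he.1, fun x hx y hy hxy => ?_⟩
  have hmem : e ∈ openSegment ℝ (g x) (g y) := by
    have := Set.mem_image_of_mem g.toAffineMap hxy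
    rw [image_openSegment] at this
    simpa [hgf he.1] using this
  rw [← he.2 _ (hg hx) _ (hg hy) hmem, hfg hx]

variable [TopologicalSpace E] [T2Space E] [IsTopologicalAddGroup E] [ContinuousSMul ℝ E]
  [LocallyConvexSpace ℝ E]

lemma exists_pow_apply_eq_self (hD : IsCompact D) (hconv : Convex ℝ D)
    (hfin : (D.extremePoints ℝ).Finite) {f : E →L[ℝ] E} {g : E →ₗ[ℝ] E}
    (hf : Set.MapsTo f D D) (hg : Set.MapsTo g D D)
    (hgf : Set.LeftInvOn g f D) (hfg : Set.LeftInvOn f g D) :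
    ∃ N > 0, ∀ x ∈ D, (f ^ N) x = x := by
  have hext : Set.MapsTo f (D.extremePoints ℝ) (D.extremePoints ℝ) :=
    mapsTo_extremePoints (f := f.toLinearMap) hf hg hgf hfg
  have := hfin.fintype
  have hinj : Function.Injective (hext.restrict f _ _) :=
    hext.restrict_inj.2 (hgf.injOn.mono extremePoints_subset)
  obtain ⟨N, hN, hid⟩ : ∃ N > 0, (hext.restrict f _ _)^[N] = id :=
    ⟨_, Nat.factorial_pos _, Function.injective_iff_iterate_factorial_card_eq_id.1 hinj⟩
  have hfix : ∀ e ∈ D.extremePoints ℝ, (f ^ N) e = e := fun e he => by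
    rw [Set.MapsTo.iterate_restrict] at hid
    simpa using congrArg Subtype.val (congrFun hid ⟨e, he⟩)
  refine ⟨N, hN, fun x hx => ?_⟩
  rw [← closure_convexHull_extremePoints hD hconv] at hx
  exact closure_minimal (convexHull_min hfix (LinearMap.eqLocus (f ^ N).toLinearMap .id).convex)
    (isClosed_eq (f ^ N).continuous continuous_id) hx

end ExtremePoints

section RowStochastic

open Matrix

variable {K : Type*} [Fintype K] [DecidableEq K]

lemma vecMul_mem_stdSimplex {M : Matrix K K ℝ} (hM : M ∈ rowStochastic ℝ K) {p : K → ℝ}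
    (hp : p ∈ stdSimplex ℝ K) : p ᵥ* M ∈ stdSimplex ℝ K := by
  refine ⟨nonneg_vecMul_of_mem_rowStochastic hM hp.1, ?_⟩
  have := vecMul_dotProduct_one_eq_one_rowStochastic hM (x := p)
    (by simpa [dotProduct_one] using hp.2)
  simpa [dotProduct_one] using this

lemma isCompact_rowStochastic : IsCompact (rowStochastic ℝ K : Set (Matrix K K ℝ)) := by
  have : (rowStochastic ℝ K : Set (Matrix K K ℝ)) = Set.univ.pi fun _ => stdSimplex ℝ K := by
    ext M
    rw [SetLike.mem_coe, mem_rowStochastic_iff_sum]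
    exact ⟨fun h k _ => ⟨h.1 k, h.2 k⟩,
      fun h => ⟨fun k => (h k trivial).1, fun k => (h k trivial).2⟩⟩
  rw [this]
  exact isCompact_univ_pi fun _ => isCompact_stdSimplex ℝ K

lemma toContinuousLinearMap_vecMulLinear_pow_apply (T : Matrix K K ℝ) (n : ℕ) (p : K → ℝ) :
    (LinearMap.toContinuousLinearMap T.vecMulLinear ^ n) p = p ᵥ* T ^ n := by
  induction n with
  | zero => simp
  | succ n ih => simp [pow_succ', ih, pow_succ T]

lemma exists_mul_pow_eq_self_of_mem_rowStochastic {T B : Matrix K K ℝ}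
    (hT : T ∈ rowStochastic ℝ K) (hB : B ∈ rowStochastic ℝ K) (hTB : Commute T B)
    (hidem : IsIdempotentElem (T * B)) : ∃ N > 0, T * B * T ^ N = T * B := by
  set P := T * B
  set D : Set (K → ℝ) := P.vecMulLinear '' stdSimplex ℝ K with hD
  have mapsTo {M : Matrix K K ℝ} (hM : M ∈ rowStochastic ℝ K) (hMP : Commute M P) :
      Set.MapsTo M.vecMulLinear D D := by
    rintro _ ⟨p, hp, rfl⟩
    exact ⟨p ᵥ* M, vecMul_mem_stdSimplex hM hp, by simp [hMP.eq]⟩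
  have vecMul_P : ∀ d ∈ D, d ᵥ* P = d := by
    rintro _ ⟨p, -, rfl⟩
    simp [hidem.eq]
  have hTP : Commute T P := (Commute.refl T).mul_right hTB
  have hBP : Commute B P := hTB.symm.mul_right (Commute.refl B)
  have hfin : (D.extremePoints ℝ).Finite := by
    rw [hD, ← convexHull_basis_eq_stdSimplex, LinearMap.image_convexHull]
    exact ((Set.finite_range _).image _).subset extremePoints_convexHull_subset
  obtain ⟨N, hN, hperiod⟩ := exists_pow_apply_eq_self
    ((isCompact_stdSimplex ℝ K).image (LinearMap.continuous_of_finiteDimensional _))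
    ((convex_stdSimplex ℝ K).linear_image _) hfin
    (f := LinearMap.toContinuousLinearMap T.vecMulLinear) (mapsTo hT hTP) (mapsTo hB hBP)
    (fun d hd => by simpa using vecMul_P d hd)
    (fun d hd => by simpa [← hTB.eq] using vecMul_P d hd)
  refine ⟨N, hN, Matrix.ext_of_single_vecMul fun k => ?_⟩
  have := hperiod _ (Set.mem_image_of_mem _ (single_mem_stdSimplex ℝ k))
  rw [toContinuousLinearMap_vecMulLinear_pow_apply] at this
  simpa only [Matrix.vecMulLinear_apply, Matrix.vecMul_vecMul] using this

lemma exists_tendsto_pow_mul_of_mem_rowStochastic {T : Matrix K K ℝ} (hT : T ∈ rowStochastic ℝ K) :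
    ∃ N > 0, ∃ P, Tendsto (fun n => T ^ (N * n)) atTop (𝓝 P) := by
  have : CompactSpace (rowStochastic ℝ K) := isCompact_iff_compactSpace.1 isCompact_rowStochastic
  obtain ⟨B, hB, hidem⟩ :=
    exists_isIdempotentElem_mul_mem_closure_powers (⟨T, hT⟩ : rowStochastic ℝ K)
  obtain ⟨N, hN, hfix⟩ := exists_mul_pow_eq_self_of_mem_rowStochastic hT B.2
    (congrArg Subtype.val (commute_of_mem_topologicalClosure_powers hB).eq)
    (congrArg Subtype.val hidem.eq)
  have htendsto := tendsto_pow_mul_of_isIdempotentElem hN hidem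
    (mul_mem (Submonoid.le_topologicalClosure _ (Submonoid.mem_powers _)) hB) (Subtype.ext hfix)
  exact ⟨N, hN, _, (continuous_subtype_val.tendsto _).comp htendsto⟩

end RowStochastic

section Words

variable {S I : Type*}

/-- The total reward along a word, read from left to right from the state `y`: the letter `i` pays
`r i y` and moves the state to `y * A i`. -/
def wordReward [Mul S] (A : I → S) (r : I → S → ℝ) : S → List I → ℝ
  | _, [] => 0
  | y, i :: w => r i y + wordReward A r (y * A i) w

variable {A : I → S} {r : I → S → ℝ}

@[simp]
lemma wordReward_nil [Mul S] (y : S) : wordReward A r y [] = 0 := rfl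

@[simp]
lemma wordReward_cons [Mul S] (y : S) (i : I) (w : List I) :
    wordReward A r y (i :: w) = r i y + wordReward A r (y * A i) w := rfl

lemma wordReward_sub_const [Mul S] (v : ℝ) (y : S) (w : List I) :
    wordReward A (fun i s => r i s - v) y w = wordReward A r y w - v * w.length := by
  induction w generalizing y with
  | nil => simp
  | cons i w ih =>
    simp only [wordReward_cons, ih, List.length_cons, Nat.cast_add_one]
    ring

lemma wordReward_map {T F : Type*} [Mul S] [Mul T] [FunLike F S T] [MulHomClass F S T] (φ : F)
    (A : I → S) (r : I → T → ℝ) (y : S) (w : List I) : wordReward (fun i => φ (A i)) r (φ y) w =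
      wordReward A (fun i s => r i (φ s)) y w := by
  induction w generalizing y with
  | nil => simp
  | cons i w ih => rw [wordReward_cons, wordReward_cons, ← map_mul, ih]

lemma abs_wordReward_le [Mul S] {B : ℝ} (hB : ∀ i s, |r i s| ≤ B) (y : S) (w : List I) :
    |wordReward A r y w| ≤ B * w.length := by
  induction w generalizing y with
  | nil => simp
  | cons i w ih =>
    calc |wordReward A r y (i :: w)| ≤ |r i y| + |wordReward A r (y * A i) w| := abs_add_le _ _
      _ ≤ B + B * w.length := add_le_add (hB i y) (ih _)
      _ = B * (i :: w).length := by push_cast [List.length_cons]; ring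

lemma continuous_wordReward [Mul S] [TopologicalSpace S] [ContinuousMul S]
    (hr : ∀ i, Continuous (r i)) (w : List I) : Continuous fun y => wordReward A r y w := by
  induction w with
  | nil => exact continuous_const
  | cons i w ih => exact (hr i).add (ih.comp (continuous_mul_const (A i)))

lemma prod_map_eq_prod_pow_count [CommMonoid S] [DecidableEq I] {J : Finset I} {w : List I}
    (hw : ∀ i ∈ w, i ∈ J) : (w.map A).prod = ∏ j ∈ J, A j ^ w.count j := by
  rw [Finset.prod_list_map_count]
  refine Finset.prod_subset (fun i hi => hw i (List.mem_toFinset.1 hi)) fun i _ hi => ?_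
  rw [List.count_eq_zero_of_not_mem (mt List.mem_toFinset.2 hi), pow_zero]

variable [Monoid S]

lemma wordReward_append (y : S) (u w : List I) :
    wordReward A r y (u ++ w) = wordReward A r y u + wordReward A r (y * (u.map A).prod) w := by
  induction u generalizing y with
  | nil => simp
  | cons i u ih => simp [ih, mul_assoc, add_assoc]

lemma wordReward_take (y : S) (a : Stream' I) (n : ℕ) :
    wordReward A r y (a.take n) =
      ∑ t ∈ Finset.range n, r (a.get t) (y * ((a.take t).map A).prod) := by
  induction n with
  | zero => simp
  | succ n ih =>
    rw [Stream'.take_succ', wordReward_append, ih, Finset.sum_range_succ]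
    simp

lemma wordReward_le_of_forall_append {x y : S} {ε : ℝ} {w : List I}
    (h : ∀ u i t, w = u ++ i :: t → r i (x * (u.map A).prod) ≤ r i (y * (u.map A).prod) + ε) :
    wordReward A r x w ≤ wordReward A r y w + ε * w.length := by
  induction w generalizing x y with
  | nil => simp
  | cons i w ih =>
    have hhead : r i x ≤ r i y + ε := by simpa using h [] i w rfl
    have htail := ih (x := x * A i) (y := y * A i) fun u j t ht => by
      simpa [mul_assoc] using h (i :: u) j t (by rw [ht, List.cons_append])
    simp only [wordReward_cons, List.length_cons, Nat.cast_add_one]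
    linarith

lemma mul_prod_map_flatten_eq_self {y : S} {L : List (List I)}
    (hL : ∀ w ∈ L, y * (w.map A).prod = y) : y * (L.flatten.map A).prod = y := by
  induction L with
  | nil => simp
  | cons w L ih =>
    rw [List.forall_mem_cons] at hL
    rw [List.flatten_cons, List.map_append, List.prod_append, ← mul_assoc, hL.1, ih hL.2]

lemma wordReward_flatten {y : S} {L : List (List I)} (hL : ∀ w ∈ L, y * (w.map A).prod = y) :
    wordReward A r y L.flatten = (L.map (wordReward A r y)).sum := by
  induction L with
  | nil => simp
  | cons w L ih =>
    rw [List.forall_mem_cons] at hL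
    rw [List.flatten_cons, wordReward_append, hL.1, ih hL.2, List.map_cons, List.sum_cons]

lemma exists_list_forall_count_eq [Finite I] [DecidableEq I] (n : I → ℕ) :
    ∃ w : List I, ∀ i, w.count i = n i := by
  refine ⟨(Finsupp.toMultiset (Finsupp.equivFunOnFinite.symm n)).toList, fun i => ?_⟩
  rw [← Multiset.coe_count, Multiset.coe_toList, Finsupp.count_toMultiset,
    Finsupp.equivFunOnFinite_symm_apply_apply]

lemma exists_infix_forall_dvd_count [Fintype I] [DecidableEq I] {N : ℕ} [NeZero N] {w : List I}
    (hw : N ^ Fintype.card I < w.length) :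
    ∃ u c t, w = u ++ c ++ t ∧ c ≠ [] ∧ c.length ≤ N ^ Fintype.card I ∧ ∀ i, N ∣ c.count i := by
  let F : Fin (N ^ Fintype.card I + 1) → I → ZMod N := fun m i => ((w.take m).count i : ℕ)
  obtain ⟨m, n, hmn, hF⟩ : ∃ m n, m < n ∧ F m = F n := by
    obtain ⟨m, n, hne, h⟩ := Fintype.exists_ne_map_eq_of_card_lt F (by simp [ZMod.card])
    rcases lt_or_gt_of_ne hne with hlt | hlt
    exacts [⟨m, n, hlt, h⟩, ⟨n, m, hlt, h.symm⟩]
  have hmn' : (m : ℕ) < n := hmn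
  have := n.is_le
  have htake : w.take n = w.take m ++ (w.take n).drop m := by
    conv_lhs => rw [← List.take_append_drop m (w.take n), List.take_take, min_eq_left hmn'.le]
  refine ⟨w.take m, (w.take n).drop m, w.drop n, ?_, ?_, ?_, fun i => ?_⟩
  · rw [← htake, List.take_append_drop]
  · exact List.ne_nil_of_length_pos (by simp; lia)
  · simp
    lia
  · have hi := congrFun hF i
    simp only [F] at hi
    rwa [htake, List.count_append, Nat.cast_add, left_eq_add, ZMod.natCast_eq_zero_iff] at hi

end Words

section PowerLimits

variable {S : Type*} [TopologicalSpace S]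

section Monoid

variable [Monoid S] [ContinuousMul S]

/-- The states that are limits of products of letters: the closed submonoid generated by the
range of `A`. -/
def limitStates {I : Type*} (A : I → S) : Submonoid S :=
  (Submonoid.closure (Set.range A)).topologicalClosure

lemma prod_map_mem_limitStates {I : Type*} (A : I → S) (w : List I) :
    (w.map A).prod ∈ limitStates A :=
  Submonoid.le_topologicalClosure _ (Submonoid.list_prod_mem _ fun x hx => by
    obtain ⟨i, -, rfl⟩ := List.mem_map.1 hx
    exact Submonoid.subset_closure ⟨i, rfl⟩)

lemma mem_limitStates_of_tendsto_pow_mul {I : Type*} {A P : I → S} {N : ℕ}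
    (hP : ∀ i, Tendsto (fun n => A i ^ (N * n)) atTop (𝓝 (P i))) (i : I) : P i ∈ limitStates A :=
  (Submonoid.isClosed_topologicalClosure _).mem_of_tendsto (hP i) (.of_forall fun n =>
    pow_mem (Submonoid.le_topologicalClosure _ <| Submonoid.subset_closure <|
      Set.mem_range_self i) (N * n))

variable [T2Space S] {T P : S} {N : ℕ}

lemma mul_pow_eq_of_tendsto_pow_mul (h : Tendsto (fun n => T ^ (N * n)) atTop (𝓝 P)) :
    P * T ^ N = P :=
  tendsto_nhds_unique (h.mul_const (T ^ N))
    ((h.comp (tendsto_add_atTop_nat 1)).congr fun n => by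
      rw [Function.comp_apply, Nat.mul_succ, pow_add])

lemma isIdempotentElem_of_tendsto_pow_mul (h : Tendsto (fun n => T ^ (N * n)) atTop (𝓝 P)) :
    IsIdempotentElem P :=
  tendsto_nhds_unique (h.const_mul P)
    (tendsto_const_nhds.congr fun n =>
      (mul_pow_mul_eq_self (mul_pow_eq_of_tendsto_pow_mul h) n).symm)

lemma exists_eq_pow_or_eq_mul_pow [NeZero N] (h : Tendsto (fun n => T ^ (N * n)) atTop (𝓝 P))
    {x : S} (hx : x ∈ (Submonoid.powers T).topologicalClosure) :
    ∃ n, x = T ^ n ∨ x = P * T ^ n := by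
  set E := insert P (Set.range fun n => T ^ (N * n))
  set F := (T ^ ·) '' Set.Iio N
  have hclosed : IsClosed ((fun p : S × S => p.1 * p.2) '' E ×ˢ F) :=
    ((h.isCompact_insert_range.prod ((Set.finite_Iio N).image _).isCompact).image
      continuous_mul).isClosed
  obtain ⟨⟨e, f⟩, ⟨he, l, -, rfl⟩, rfl⟩ := closure_minimal (by
    rintro _ ⟨n, rfl⟩
    exact ⟨(T ^ (N * (n / N)), T ^ (n % N)),
      ⟨.inr ⟨n / N, rfl⟩, n % N, n.mod_lt (NeZero.pos N), rfl⟩,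
      by simp [← pow_add, Nat.div_add_mod]⟩) hclosed hx
  rcases he with rfl | ⟨n, rfl⟩
  · exact ⟨l, .inr rfl⟩
  · exact ⟨N * n + l, .inl (pow_add T _ _).symm⟩

end Monoid

variable {I : Type*} [CommMonoid S] [ContinuousMul S] {A P : I → S} {N : ℕ}

lemma tendsto_prod_pow_mul (hP : ∀ i, Tendsto (fun n => A i ^ (N * n)) atTop (𝓝 (P i)))
    (J : Finset I) : Tendsto (fun n => ∏ j ∈ J, A j ^ (N * n)) atTop (𝓝 (∏ j ∈ J, P j)) :=
  tendsto_finsetProd J fun j _ => hP j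

lemma eventually_forall_dist_mul_lt [CompactSpace S] {X : Type*} {l : Filter X} {f : S → ℝ}
    (hf : Continuous f) {x : X → S} {e : S} (hx : Tendsto x l (𝓝 e)) {ε : ℝ} (hε : 0 < ε) :
    ∀ᶠ k in l, ∀ s, dist (f (x k * s)) (f (e * s)) < ε := by
  let F : C(S × S, ℝ) := ⟨fun p => f (p.1 * p.2), hf.comp continuous_mul⟩
  filter_upwards [Metric.tendsto_nhds.1 ((F.curry.continuous.tendsto e).comp hx) ε hε] with k hk s
  exact (ContinuousMap.dist_apply_le_dist s).trans_lt hk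

variable [T2Space S]

lemma isIdempotentElem_prod_of_tendsto_pow_mul
    (hP : ∀ i, Tendsto (fun n => A i ^ (N * n)) atTop (𝓝 (P i))) (J : Finset I) :
    IsIdempotentElem (∏ j ∈ J, P j) := by
  rw [IsIdempotentElem, ← Finset.prod_mul_distrib]
  exact Finset.prod_congr rfl fun j _ => (isIdempotentElem_of_tendsto_pow_mul (hP j)).eq

lemma prod_mul_prod_map_eq_self [DecidableEq I]
    (hP : ∀ i, Tendsto (fun n => A i ^ (N * n)) atTop (𝓝 (P i))) {J : Finset I} {w : List I}
    (hw : ∀ i ∈ w, i ∈ J) (hdvd : ∀ i, N ∣ w.count i) :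
    (∏ j ∈ J, P j) * (w.map A).prod = ∏ j ∈ J, P j := by
  rw [prod_map_eq_prod_pow_count hw, ← Finset.prod_mul_distrib]
  refine Finset.prod_congr rfl fun j _ => ?_
  obtain ⟨n, hn⟩ := hdvd j
  rw [hn, mul_pow_mul_eq_self (mul_pow_eq_of_tendsto_pow_mul (hP j))]

variable [CompactSpace S]

lemma exists_eq_prod_of_mem_limitStates [Fintype I] {x : S} (hx : x ∈ limitStates A) :
    ∃ f : I → S, (∀ i, f i ∈ (Submonoid.powers (A i)).topologicalClosure) ∧ x = ∏ i, f i := by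
  classical
  let φ : (I → S) →* S :=
    { toFun f := ∏ i, f i
      map_one' := by simp
      map_mul' := by simp [Finset.prod_mul_distrib] }
  let Q : Submonoid S :=
    (Submonoid.pi Set.univ fun i => (Submonoid.powers (A i)).topologicalClosure).map φ
  have hQ : IsClosed (Q : Set S) :=
    ((isCompact_univ_pi fun i => (Submonoid.isClosed_topologicalClosure _).isCompact).image
      (continuous_finsetProd _ fun i _ => continuous_apply i)).isClosed
  have hle : Submonoid.closure (Set.range A) ≤ Q := by
    rw [Submonoid.closure_le]
    rintro _ ⟨i, rfl⟩
    refine ⟨Pi.mulSingle i (A i), fun j _ => ?_, Fintype.prod_pi_mulSingle' i (A i)⟩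
    rcases eq_or_ne j i with rfl | hj
    · simpa using Submonoid.le_topologicalClosure _ (Submonoid.mem_powers (A j))
    · simp [hj]
  obtain ⟨f, hf, rfl⟩ := Submonoid.topologicalClosure_minimal _ hle hQ hx
  exact ⟨f, fun i => hf i trivial, rfl⟩

lemma exists_eq_prod_mul_prod_map [Finite I] [NeZero N]
    (hP : ∀ i, Tendsto (fun n => A i ^ (N * n)) atTop (𝓝 (P i))) {x : S}
    (hx : x ∈ limitStates A) :
    ∃ (J : Finset I) (w : List I), x = (∏ j ∈ J, P j) * (w.map A).prod := by
  classical
  have := Fintype.ofFinite I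
  obtain ⟨f, hf, rfl⟩ := exists_eq_prod_of_mem_limitStates hx
  choose n hn using fun i => exists_eq_pow_or_eq_mul_pow (hP i) (hf i)
  obtain ⟨w, hw⟩ := exists_list_forall_count_eq n
  refine ⟨Finset.univ.filter fun i => f i = P i * A i ^ n i, w, ?_⟩
  rw [prod_map_eq_prod_pow_count (J := Finset.univ) (by simp), Finset.prod_filter,
    ← Finset.prod_mul_distrib]
  refine Finset.prod_congr rfl fun i _ => ?_
  rw [hw]
  split_ifs with hi
  · exact hi
  · rw [one_mul, (hn i).resolve_right hi]

lemma exists_forall_abs_sub_prod_mul_le [Finite I] [DecidableEq I]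
    (hP : ∀ i, Tendsto (fun n => A i ^ (N * n)) atTop (𝓝 (P i))) {r : I → S → ℝ}
    (hr : ∀ i, Continuous (r i)) {ε : ℝ} (hε : 0 < ε) :
    ∃ M : ℕ, ∀ (J : Finset I) (u : List I) (i : I), (∀ j ∈ J, M ≤ u.count j) →
      |r i (u.map A).prod - r i ((∏ j ∈ J, P j) * (u.map A).prod)| ≤ ε := by
  have hunif : ∀ᶠ n in atTop, ∀ (J : Finset I) (i : I) (s : S),
      dist (r i ((∏ j ∈ J, A j ^ (N * n)) * s)) (r i ((∏ j ∈ J, P j) * s)) < ε :=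
    eventually_all.2 fun J => eventually_all.2 fun i =>
      eventually_forall_dist_mul_lt (hr i) (tendsto_prod_pow_mul hP J) hε
  obtain ⟨n, hn⟩ := hunif.exists
  refine ⟨N * n, fun J u i hu => ?_⟩
  obtain ⟨s, hs⟩ : ∏ j ∈ J, A j ^ (N * n) ∣ (u.map A).prod := by
    rw [prod_map_eq_prod_pow_count (J := J ∪ u.toFinset) (by simp +contextual)]
    exact (Finset.prod_dvd_prod_of_dvd _ _ fun j hj => pow_dvd_pow _ (hu j hj)).trans
      (Finset.prod_dvd_prod_of_subset _ _ _ Finset.subset_union_left)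
  have hfix : (∏ j ∈ J, P j) * ∏ j ∈ J, A j ^ (N * n) = ∏ j ∈ J, P j := by
    rw [← Finset.prod_mul_distrib]
    exact Finset.prod_congr rfl fun j _ =>
      mul_pow_mul_eq_self (mul_pow_eq_of_tendsto_pow_mul (hP j)) n
  rw [hs, ← mul_assoc, hfix, ← Real.dist_eq]
  exact (hn J i s).le

end PowerLimits

section OptimalCycles

variable {S I : Type*} [CommMonoid S] [TopologicalSpace S] [CompactSpace S] [T2Space S]
  [ContinuousMul S] [Finite I] {A P : I → S} {N : ℕ} {r : I → S → ℝ}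

lemma exists_optimal_cycle [Nonempty I]
    (hP : ∀ i, Tendsto (fun n => A i ^ (N * n)) atTop (𝓝 (P i))) (hr : ∀ i, Continuous (r i))
    {D : ℕ} (hN : N ≠ 0) (hND : N ≤ D) :
    ∃ v, ∃ x ∈ limitStates A, ∃ c ≠ [], x * (c.map A).prod = x ∧
      wordReward A r x c = v * c.length ∧
      ∀ y ∈ limitStates A, ∀ d ≠ [], d.length ≤ D → y * (d.map A).prod = y →
        wordReward A r y d ≤ v * d.length := by
  set V : Set ℝ := ⋃ c ∈ {c : List I | c ≠ [] ∧ c.length ≤ D},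
    (fun y => wordReward A r y c / c.length) '' {y | y ∈ limitStates A ∧ y * (c.map A).prod = y}
  have hfin : {c : List I | c ≠ [] ∧ c.length ≤ D}.Finite :=
    (List.finite_length_le I D).subset fun c hc => hc.2
  have hcompact : IsCompact V := hfin.isCompact_biUnion fun c _ =>
    (((Submonoid.isClosed_topologicalClosure _).inter
      (isClosed_eq (continuous_mul_const _) continuous_id)).isCompact).image
        ((continuous_wordReward hr c).div_const _)
  have hne : V.Nonempty := by
    obtain ⟨i⟩ := ‹Nonempty I›
    refine ⟨_, Set.mem_biUnion (x := List.replicate N i) ⟨by simpa, by simpa⟩ ⟨P i, ⟨?_, ?_⟩, rfl⟩⟩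
    · exact mem_limitStates_of_tendsto_pow_mul hP i
    · simpa using mul_pow_eq_of_tendsto_pow_mul (hP i)
  obtain ⟨v, hv, hmax⟩ := hcompact.exists_isGreatest hne
  have length_pos {c : List I} (hc : c ≠ []) : (0 : ℝ) < c.length :=
    Nat.cast_pos.2 (List.length_pos_of_ne_nil hc)
  obtain ⟨c, hc, x, ⟨hx, hxc⟩, hxv⟩ := Set.mem_iUnion₂.1 hv
  refine ⟨v, x, hx, c, hc.1, hxc, (div_eq_iff (length_pos hc.1).ne').1 hxv, ?_⟩
  exact fun y hy d hd hdD hyd => (div_le_iff₀ (length_pos hd)).1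
    (hmax (Set.mem_biUnion ⟨hd, hdD⟩ ⟨y, ⟨hy, hyd⟩, rfl⟩))

end OptimalCycles

section Deficit

variable {S I : Type*} [Fintype I] [DecidableEq I]

/-- The number of letters that a word still lacks for every letter to occur `M` times in it. -/
def deficit (M : ℕ) (u : List I) : ℕ := ∑ i, (M - u.count i)

lemma deficit_append_lt {M : ℕ} {u : List I} {i : I} (hi : u.count i < M) {w : List I}
    (hw : i ∈ w) : deficit M (u ++ w) < deficit M u := by
  have := List.count_pos_iff.2 hw
  refine Finset.sum_lt_sum (fun j _ => ?_) ⟨i, Finset.mem_univ i, ?_⟩ <;>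
    rw [List.count_append] <;> lia

lemma wordReward_prod_map_le_of_deficit [Monoid S] {A : I → S}
    {r : I → S → ℝ} {M : ℕ} {B C ε : ℝ} (hB₀ : 0 ≤ B) (hC : 0 ≤ C) (hε : 0 ≤ ε)
    (hB : ∀ i s, |r i s| ≤ B)
    (hrun : ∀ (u w : List I), (∀ i ∈ w, M ≤ u.count i) →
      wordReward A r (u.map A).prod w ≤ C + ε * w.length) (u w : List I) :
    wordReward A r (u.map A).prod w ≤ (deficit M u + 1) * (C + B) + ε * w.length := by
  induction hn : deficit M u using Nat.strong_induction_on generalizing u w with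
  | _ n ih =>
  subst hn
  -- Cut `w` at its first letter that occurs fewer than `M` times in `u`: the part before it is
  -- bounded by `hrun`, and absorbing that letter into `u` lowers the deficit.
  rcases hfind : w.find? (fun i => u.count i < M) with _ | i
  · have hw : ∀ i ∈ w, M ≤ u.count i := by simpa using List.find?_eq_none.1 hfind
    have := hrun u w hw
    nlinarith [mul_nonneg (deficit M u).cast_nonneg (add_nonneg hC hB₀)]
  obtain ⟨hi, s, t, rfl, hs⟩ := List.find?_eq_some_iff_append.1 hfind
  have hdef : deficit M (u ++ (s ++ [i])) + 1 ≤ deficit M u :=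
    deficit_append_lt (by simpa using hi) (by simp)
  have hbefore := hrun u s (by simpa using hs)
  have hletter := le_of_abs_le (hB i ((u.map A).prod * (s.map A).prod))
  have hafter := ih _ hdef (u ++ (s ++ [i])) t rfl
  simp only [List.map_append, List.prod_append, ← mul_assoc, List.map_cons, List.map_nil,
    List.prod_singleton] at hafter
  simp only [wordReward_append, wordReward_cons, List.length_append, List.length_cons]
  push_cast
  have : (deficit M (u ++ (s ++ [i])) + 1 : ℝ) * (C + B) ≤ deficit M u * (C + B) := by
    gcongr
    exact_mod_cast hdef
  linarith

end Deficit

section UpperBound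

variable {S I : Type*} [CommMonoid S] [TopologicalSpace S] [T2Space S]
  [ContinuousMul S] [Fintype I] {A P : I → S} {N : ℕ} [NeZero N] {r : I → S → ℝ}
  {B : ℝ}

lemma wordReward_le_of_prod_mul_eq_self
    (hP : ∀ i, Tendsto (fun n => A i ^ (N * n)) atTop (𝓝 (P i)))
    (hB₀ : 0 ≤ B) (hB : ∀ i s, |r i s| ≤ B)
    (hcycle : ∀ y ∈ limitStates A, ∀ c ≠ [], c.length ≤ N ^ Fintype.card I →
      y * (c.map A).prod = y → wordReward A r y c ≤ 0)
    {J : Finset I} {y : S} (hy : y ∈ limitStates A) (hJy : (∏ j ∈ J, P j) * y = y)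
    {w : List I} (hw : ∀ i ∈ w, i ∈ J) :
    wordReward A r y w ≤ B * (N ^ Fintype.card I : ℕ) := by
  classical
  induction hn : w.length using Nat.strong_induction_on generalizing w with
  | _ n ih =>
  subst hn
  rcases le_or_gt w.length (N ^ Fintype.card I) with hlen | hlen
  · exact (le_of_abs_le (abs_wordReward_le hB y w)).trans (by gcongr)
  obtain ⟨u, c, t, rfl, hne, hlenc, hdvd⟩ := exists_infix_forall_dvd_count hlen
  have hcyc : y * (u.map A).prod * (c.map A).prod = y * (u.map A).prod := by
    have hc := prod_mul_prod_map_eq_self hP (J := J) (fun i hi => hw i (by simp [hi])) hdvd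
    rw [← hJy, mul_assoc _ y, mul_right_comm, hc]
  have hu : y * (u.map A).prod ∈ limitStates A := mul_mem hy (prod_map_mem_limitStates A u)
  calc wordReward A r y (u ++ c ++ t)
      = wordReward A r y (u ++ t) + wordReward A r (y * (u.map A).prod) c := by
        simp only [wordReward_append, List.map_append, List.prod_append, ← mul_assoc, hcyc]
        ring
    _ ≤ wordReward A r y (u ++ t) := add_le_of_nonpos_right (hcycle _ hu c hne hlenc hcyc)
    _ ≤ B * (N ^ Fintype.card I : ℕ) := by
        refine ih _ ?_ (fun i hi => hw i ?_) rfl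
        · simpa using List.length_pos_of_ne_nil hne
        · simp only [List.mem_append] at hi ⊢
          tauto

lemma exists_forall_wordReward_prod_map_le [CompactSpace S] [DecidableEq I]
    (hP : ∀ i, Tendsto (fun n => A i ^ (N * n)) atTop (𝓝 (P i))) (hr : ∀ i, Continuous (r i))
    (hB₀ : 0 ≤ B) (hB : ∀ i s, |r i s| ≤ B)
    (hcycle : ∀ y ∈ limitStates A, ∀ c ≠ [], c.length ≤ N ^ Fintype.card I →
      y * (c.map A).prod = y → wordReward A r y c ≤ 0) {ε : ℝ} (hε : 0 < ε) :
    ∃ M, ∀ (u w : List I), (∀ i ∈ w, M ≤ u.count i) →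
      wordReward A r (u.map A).prod w ≤ B * (N ^ Fintype.card I : ℕ) + ε * w.length := by
  obtain ⟨M, hM⟩ := exists_forall_abs_sub_prod_mul_le hP hr hε
  refine ⟨M, fun u w hw => ?_⟩
  set e := ∏ j ∈ w.toFinset, P j
  have he : e * (u.map A).prod ∈ limitStates A := mul_mem
    (prod_mem fun j _ => mem_limitStates_of_tendsto_pow_mul hP j) (prod_map_mem_limitStates A u)
  have hee : e * (e * (u.map A).prod) = e * (u.map A).prod := by
    rw [← mul_assoc, (isIdempotentElem_prod_of_tendsto_pow_mul hP _).eq]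
  calc wordReward A r (u.map A).prod w
      ≤ wordReward A r (e * (u.map A).prod) w + ε * w.length :=
        wordReward_le_of_forall_append fun t i _ _ => by
          have := hM w.toFinset (u ++ t) i fun j hj => (hw j (List.mem_toFinset.1 hj)).trans
            (by simp)
          rw [List.map_append, List.prod_append, ← mul_assoc] at this
          linarith [le_of_abs_le this]
    _ ≤ _ := by
        gcongr
        exact wordReward_le_of_prod_mul_eq_self hP hB₀ hB hcycle he hee (by simp)

lemma exists_forall_wordReward_one_le [CompactSpace S]
    (hP : ∀ i, Tendsto (fun n => A i ^ (N * n)) atTop (𝓝 (P i))) (hr : ∀ i, Continuous (r i))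
    (hB₀ : 0 ≤ B) (hB : ∀ i s, |r i s| ≤ B)
    (hcycle : ∀ y ∈ limitStates A, ∀ c ≠ [], c.length ≤ N ^ Fintype.card I →
      y * (c.map A).prod = y → wordReward A r y c ≤ 0) {ε : ℝ} (hε : 0 < ε) :
    ∃ C, ∀ w : List I, wordReward A r 1 w ≤ C + ε * w.length := by
  classical
  obtain ⟨M, hM⟩ := exists_forall_wordReward_prod_map_le hP hr hB₀ hB hcycle hε
  exact ⟨_, fun w => by
    simpa using wordReward_prod_map_le_of_deficit hB₀ (by positivity) hε.le hB hM [] w⟩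

end UpperBound

section Pumping

variable {S I : Type*}

lemma exists_stream_take_mul_eq_flatten {L : ℕ} (hL : 0 < L) {blk : ℕ → List I}
    (hblk : ∀ k, (blk k).length = L) :
    ∃ b : Stream' I, ∀ k, b.take (L * k) = ((List.range k).map blk).flatten := by
  obtain ⟨b, hb⟩ : ∃ b : Stream' I, ∀ t,
      b.get t = (blk (t / L))[t % L]'(by rw [hblk]; exact t.mod_lt hL) :=
    ⟨fun t => (blk (t / L))[t % L]'(by rw [hblk]; exact t.mod_lt hL), fun _ => rfl⟩
  refine ⟨b, fun k => ?_⟩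
  induction k with
  | zero => simp
  | succ k ih =>
    have hdrop : (b.drop (L * k)).take L = blk k := by
      refine List.ext_getElem (by simp [hblk]) fun t ht _ => ?_
      have htL : t < L := by simpa using ht
      simp [hb, Nat.mul_add_div hL, Nat.mod_eq_of_lt htL, Nat.div_eq_of_lt htL]
    rw [Nat.mul_succ, Stream'.take_add, ih, hdrop, List.range_succ]
    simp

lemma tendsto_natSqrt_atTop : Tendsto Nat.sqrt atTop atTop :=
  tendsto_atTop_atTop.2 fun b => ⟨b * b, fun _ hn => Nat.le_sqrt.2 hn⟩

lemma isLittleO_natSqrt : (fun n : ℕ => (Nat.sqrt n : ℝ)) =o[atTop] fun n => (n : ℝ) := by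
  have hone : (fun _ => (1 : ℝ)) =o[atTop] fun n : ℕ => (Nat.sqrt n : ℝ) :=
    (Asymptotics.isLittleO_const_id_atTop (1 : ℝ)).comp_tendsto
      (tendsto_natCast_atTop_atTop.comp tendsto_natSqrt_atTop)
  simpa using ((Asymptotics.isBigO_refl _ _).mul_isLittleO hone).trans_le fun n => by
    simpa using mod_cast Nat.sqrt_le n

/-- The `k`-th block of the strategy that repeats `c` but plays `u` instead when `k + 1` is a
perfect square; perfect squares are sparse enough for the reward of `u` to be negligible. -/
def pumpBlock (u c : List I) (k : ℕ) : List I := if Nat.sqrt k < Nat.sqrt (k + 1) then u else c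

lemma sqrt_le_count_flatten_pumpBlock [DecidableEq I] {u c : List I} {i : I} (hi : i ∈ u) (k : ℕ) :
    Nat.sqrt k ≤ ((List.range k).map (pumpBlock u c)).flatten.count i := by
  have := List.count_pos_iff.2 hi
  induction k with
  | zero => simp
  | succ k ih =>
    have := Nat.sqrt_succ_le_succ_sqrt k
    simp only [List.range_succ, List.map_append, List.flatten_append, List.count_append,
      List.map_cons, List.map_nil, List.flatten_singleton, pumpBlock]
    split_ifs <;> lia

variable [Monoid S] {A : I → S} {r : I → S → ℝ}

lemma wordReward_flatten_pumpBlock {x : S} {u c : List I} (hu : x * (u.map A).prod = x)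
    (hc : x * (c.map A).prod = x) (hRc : wordReward A r x c = 0) (k : ℕ) :
    wordReward A r x ((List.range k).map (pumpBlock u c)).flatten =
      Nat.sqrt k * wordReward A r x u := by
  rw [wordReward_flatten (by simp only [pumpBlock, List.mem_map]; grind)]
  induction k with
  | zero => simp
  | succ k ih =>
    have := Nat.sqrt_succ_le_succ_sqrt k
    have := Nat.sqrt_le_sqrt k.le_succ
    simp only [List.range_succ, List.map_append, List.sum_append, ih, List.map_cons, List.map_nil,
      List.sum_singleton]
    rcases lt_or_ge (Nat.sqrt k) (Nat.sqrt (k + 1)) with hlt | hge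
    · rw [pumpBlock, if_pos hlt, show Nat.sqrt (k + 1) = Nat.sqrt k + 1 by lia]
      push_cast
      ring
    · rw [pumpBlock, if_neg hge.not_gt, hRc, add_zero, show Nat.sqrt (k + 1) = Nat.sqrt k by lia]

lemma exists_stream_isLittleO_of_length_eq [DecidableEq I] {B : ℝ} (hB : ∀ i s, |r i s| ≤ B)
    {x : S} {u c : List I} (hne : u ≠ []) (hlen : c.length = u.length)
    (hu : x * (u.map A).prod = x) (hc : x * (c.map A).prod = x) (hRc : wordReward A r x c = 0) :
    ∃ b : Stream' I, (fun n => wordReward A r x (b.take n)) =o[atTop] (fun n => (n : ℝ)) ∧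
      ∀ i ∈ u, Tendsto (fun n => (b.take n).count i) atTop atTop := by
  set L := u.length
  have hL : 0 < L := List.length_pos_of_ne_nil hne
  obtain ⟨b, hb⟩ := exists_stream_take_mul_eq_flatten hL (blk := pumpBlock u c) (by
    intro k
    rw [pumpBlock]
    split_ifs
    exacts [rfl, hlen])
  have htake (n : ℕ) : b.take n = ((List.range (n / L)).map (pumpBlock u c)).flatten ++
      (b.drop (L * (n / L))).take (n % L) := by
    rw [← hb, ← Stream'.take_add, Nat.div_add_mod]
  refine ⟨b, ?_, fun i hi => ?_⟩
  · refine Asymptotics.IsBigO.trans_isLittleO (g := fun n : ℕ =>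
      |wordReward A r x u| * Nat.sqrt n + B * L) (.of_bound' (.of_forall fun n => ?_)) ?_
    · have hB₀ : 0 ≤ B := (abs_nonneg _).trans (hB (u.head hne) x)
      rw [Real.norm_eq_abs, Real.norm_of_nonneg (by positivity), htake, wordReward_append,
        wordReward_flatten_pumpBlock hu hc hRc]
      refine (abs_add_le _ _).trans (add_le_add ?_ ((abs_wordReward_le hB _ _).trans ?_))
      · rw [abs_mul, Nat.abs_cast, mul_comm]
        gcongr
        exact Nat.div_le_self n L
      · rw [Stream'.length_take]
        gcongr
        exact (n.mod_lt hL).le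
    · exact (isLittleO_natSqrt.const_mul_left _).add
        ((Asymptotics.isLittleO_const_id_atTop (B * L)).comp_tendsto tendsto_natCast_atTop_atTop)
  · refine tendsto_atTop_mono (fun n => ?_)
      (tendsto_natSqrt_atTop.comp (Nat.tendsto_div_const_atTop hL.ne'))
    rw [htake, List.count_append]
    exact (sqrt_le_count_flatten_pumpBlock hi _).trans le_self_add

lemma exists_stream_isLittleO [DecidableEq I] {B : ℝ} (hB : ∀ i s, |r i s| ≤ B)
    {x : S} {u c : List I} (hune : u ≠ []) (hcne : c ≠ [])
    (hu : x * (u.map A).prod = x) (hc : x * (c.map A).prod = x) (hRc : wordReward A r x c = 0) :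
    ∃ b : Stream' I, (fun n => wordReward A r x (b.take n)) =o[atTop] (fun n => (n : ℝ)) ∧
      ∀ i ∈ u, Tendsto (fun n => (b.take n).count i) atTop atTop := by
  have fixes {w : List I} (hw : x * (w.map A).prod = x) (n : ℕ) :
      ∀ w' ∈ List.replicate n w, x * (w'.map A).prod = x := by
    simp +contextual [List.mem_replicate, hw]
  have hlen : c.length ≠ 0 := by simpa
  obtain ⟨b, hb, hcount⟩ := exists_stream_isLittleO_of_length_eq hB
    (u := (List.replicate c.length u).flatten) (c := (List.replicate u.length c).flatten)
    (by simp [hune, hcne]) (by simp [mul_comm])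
    (mul_prod_map_flatten_eq_self (fixes hu _)) (mul_prod_map_flatten_eq_self (fixes hc _))
    (by simp [wordReward_flatten (fixes hc _), hRc])
  exact ⟨b, hb, fun i hi => hcount i (List.mem_flatten.2 ⟨u, by simp [hlen], hi⟩)⟩

end Pumping

section LowerBound

variable {S I : Type*}

lemma isLittleO_wordReward_one_append [Monoid S] {A : I → S} {r : I → S → ℝ}
    {u : List I} {b : Stream' I}
    (h : (fun n => wordReward A r (u.map A).prod (b.take n)) =o[atTop] fun n => (n : ℝ)) :
    (fun n => wordReward A r 1 ((u ++ₛ b).take n)) =o[atTop] fun n => (n : ℝ) := by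
  have hshift : (fun n => wordReward A r (u.map A).prod (b.take (n - u.length))) =o[atTop]
      fun n => (n : ℝ) :=
    (h.comp_tendsto (tendsto_sub_atTop_nat u.length)).trans_le fun n => by simp
  refine (((Asymptotics.isLittleO_const_id_atTop (wordReward A r 1 u)).comp_tendsto
    tendsto_natCast_atTop_atTop).add hshift).congr' ?_ .rfl
  filter_upwards [eventually_ge_atTop u.length] with n hn
  obtain ⟨k, rfl⟩ := Nat.exists_eq_add_of_le hn
  rw [← Stream'.append_take, wordReward_append, one_mul, Nat.add_sub_cancel_left]
  rfl

variable [CommMonoid S] [TopologicalSpace S] [ContinuousMul S] [CompactSpace S]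
  [T2Space S] [Finite I] {A P : I → S} {N : ℕ} {r : I → S → ℝ}

lemma isLittleO_wordReward_sub_prod_mul [DecidableEq I]
    (hP : ∀ i, Tendsto (fun n => A i ^ (N * n)) atTop (𝓝 (P i))) (hr : ∀ i, Continuous (r i))
    {J : Finset I} {b : Stream' I}
    (hb : ∀ j ∈ J, Tendsto (fun n => (b.take n).count j) atTop atTop) (u : List I) :
    (fun n => wordReward A r (u.map A).prod (b.take n) -
      wordReward A r ((∏ j ∈ J, P j) * (u.map A).prod) (b.take n)) =o[atTop]
        (fun n => (n : ℝ)) := by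
  simp only [wordReward_take, ← Finset.sum_sub_distrib, mul_assoc, ← List.prod_append,
    ← List.map_append]
  refine Asymptotics.isLittleO_sum_range_of_tendsto_zero (Metric.tendsto_nhds.2 fun ε hε => ?_)
  obtain ⟨M, hM⟩ := exists_forall_abs_sub_prod_mul_le hP hr (half_pos hε)
  filter_upwards [(eventually_all_finset J).2 fun j hj =>
    (hb j hj).eventually_ge_atTop M] with n hn
  rw [Real.dist_0_eq_abs]
  refine (hM J _ _ fun j hj => (hn j hj).trans ?_).trans_lt (half_lt_self hε)
  simp

lemma exists_stream_isLittleO_wordReward_one [NeZero N]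
    (hP : ∀ i, Tendsto (fun n => A i ^ (N * n)) atTop (𝓝 (P i))) (hr : ∀ i, Continuous (r i))
    {B : ℝ} (hB : ∀ i s, |r i s| ≤ B) {x : S} (hx : x ∈ limitStates A) {c : List I} (hne : c ≠ [])
    (hc : x * (c.map A).prod = x) (hRc : wordReward A r x c = 0) :
    ∃ a : Stream' I, (fun n => wordReward A r 1 (a.take n)) =o[atTop] fun n => (n : ℝ) := by
  classical
  obtain ⟨J, m, rfl⟩ := exists_eq_prod_mul_prod_map hP hx
  obtain ⟨d, hd⟩ := exists_list_forall_count_eq fun i => if i ∈ J then N else 0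
  have mem_d (i : I) : i ∈ d ↔ i ∈ J := by
    rw [← List.count_pos_iff, hd]
    split_ifs with hi <;> simp [hi, NeZero.pos]
  have hed : (∏ j ∈ J, P j) * (d.map A).prod = ∏ j ∈ J, P j :=
    prod_mul_prod_map_eq_self hP (fun i hi => (mem_d i).1 hi) fun i => by
      rw [hd]
      split_ifs <;> simp
  have hu : (∏ j ∈ J, P j) * (m.map A).prod * ((c ++ d).map A).prod =
      (∏ j ∈ J, P j) * (m.map A).prod := by
    rw [List.map_append, List.prod_append, ← mul_assoc, hc, mul_right_comm, hed]
  obtain ⟨b, hb, hcount⟩ := exists_stream_isLittleO hB (by simp [hne]) hne hu hc hRc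
  refine ⟨m ++ₛ b, isLittleO_wordReward_one_append ?_⟩
  simpa using (isLittleO_wordReward_sub_prod_mul hP hr (fun j hj =>
    hcount j (List.mem_append_right c ((mem_d j).2 hj))) m).add hb

end LowerBound

section UniformValue

variable {S I : Type*} [Finite I] {A : I → S} {r : I → S → ℝ}

lemma exists_forall_tendsto_pow_mul [Monoid S] [TopologicalSpace S]
    (hA : ∀ i, ∃ N > 0, ∃ P, Tendsto (fun n => A i ^ (N * n)) atTop (𝓝 P)) :
    ∃ N > 0, ∃ P : I → S, ∀ i, Tendsto (fun n => A i ^ (N * n)) atTop (𝓝 (P i)) := by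
  have := Fintype.ofFinite I
  choose N hN P hP using hA
  refine ⟨∏ i, N i, Finset.prod_pos fun i _ => hN i, P, fun i => ?_⟩
  obtain ⟨k, hk⟩ := Finset.dvd_prod_of_mem N (Finset.mem_univ i)
  have hk₀ : 0 < k := Nat.pos_of_ne_zero fun h =>
    (Finset.prod_pos fun i _ => hN i).ne' (hk.trans (by simp [h]))
  simpa only [Function.comp_def, hk, id_eq, mul_assoc] using
    (hP i).comp (tendsto_id.const_mul_atTop' hk₀)

lemma exists_forall_abs_le [TopologicalSpace S] [CompactSpace S] [Nonempty S]
    (hr : ∀ i, Continuous (r i)) : ∃ B ≥ 0, ∀ i s, |r i s| ≤ B := by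
  have := Fintype.ofFinite I
  obtain ⟨B, hB⟩ := isCompact_univ.exists_bound_of_continuousOn (continuous_pi hr).continuousOn
  obtain ⟨s₀⟩ := ‹Nonempty S›
  exact ⟨B, (norm_nonneg _).trans (hB s₀ trivial), fun i s =>
    (norm_le_pi_norm (fun i => r i s) i).trans (hB s trivial)⟩

theorem exists_stream_tendsto_wordReward_div [CommMonoid S] [TopologicalSpace S] [ContinuousMul S]
    [CompactSpace S] [T2Space S] [Nonempty I]
    (hA : ∀ i, ∃ N > 0, ∃ P, Tendsto (fun n => A i ^ (N * n)) atTop (𝓝 P))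
    (hr : ∀ i, Continuous (r i)) :
    ∃ (v : ℝ) (a : Stream' I), Tendsto (fun n => wordReward A r 1 (a.take n) / n) atTop (𝓝 v) ∧
      ∀ ε > 0, ∀ᶠ n : ℕ in atTop, ∀ w : List I, w.length = n →
        wordReward A r 1 w / n ≤ v + ε := by
  have := Fintype.ofFinite I
  obtain ⟨N, hN, P, hP⟩ := exists_forall_tendsto_pow_mul hA
  have : NeZero N := ⟨hN.ne'⟩
  obtain ⟨v, x, hx, c, hne, hxc, hRc, hmax⟩ :=
    exists_optimal_cycle hP hr hN.ne' (Nat.le_self_pow (Fintype.card_ne_zero (α := I)) N)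
  let r₀ : I → S → ℝ := fun i s => r i s - v
  have hr₀ (i : I) : Continuous (r₀ i) := (hr i).sub continuous_const
  have hreward (y : S) (w : List I) : wordReward A r₀ y w = wordReward A r y w - v * w.length :=
    wordReward_sub_const v y w
  obtain ⟨B, hB₀, hB⟩ := exists_forall_abs_le hr₀
  obtain ⟨a, ha⟩ := exists_stream_isLittleO_wordReward_one hP hr₀ hB hx hne hxc (by
    rw [hreward, hRc, sub_self])
  refine ⟨v, a, ?_, fun ε hε => ?_⟩
  · refine tendsto_sub_nhds_zero_iff.1 (ha.tendsto_div_nhds_zero.congr' ?_)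
    filter_upwards [eventually_ne_atTop 0] with n hn
    rw [hreward, Stream'.length_take]
    field_simp
  · obtain ⟨C, hC⟩ := exists_forall_wordReward_one_le hP hr₀ hB₀ hB (fun y hy d hd hlen hyd => by
      rw [hreward]
      exact sub_nonpos.2 (hmax y hy d hd hlen hyd)) (half_pos hε)
    filter_upwards [(tendsto_const_div_atTop_nhds_zero_nat C).eventually_le_const (half_pos hε),
      eventually_gt_atTop 0] with n hn hn₀ w hw
    have hCw := hC w
    rw [hreward, hw] at hCw
    rw [div_le_iff₀ (by positivity)] at hn ⊢
    linarith

theorem exists_stream_tendsto_wordReward_div_of_commute [Monoid S] [TopologicalSpace S]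
    [ContinuousMul S] [T2Space S] [Nonempty I] {C : Submonoid S} (hC : IsCompact (C : Set S))
    (hAC : ∀ i, A i ∈ C) (hcomm : ∀ i j, Commute (A i) (A j))
    (hA : ∀ i, ∃ N > 0, ∃ P, Tendsto (fun n => A i ^ (N * n)) atTop (𝓝 P))
    (hr : ∀ i, Continuous (r i)) :
    ∃ (v : ℝ) (a : Stream' I), Tendsto (fun n => wordReward A r 1 (a.take n) / n) atTop (𝓝 v) ∧
      ∀ ε > 0, ∀ᶠ n : ℕ in atTop, ∀ w : List I, w.length = n →
        wordReward A r 1 w / n ≤ v + ε := by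
  let L : Submonoid S := (Submonoid.closure (Set.range A)).topologicalClosure
  have hLclosed : IsClosed (L : Set S) := Submonoid.isClosed_topologicalClosure _
  have hLC : L ≤ C := Submonoid.topologicalClosure_minimal _
    (Submonoid.closure_le.2 (Set.range_subset_iff.2 hAC)) hC.isClosed
  have : CompactSpace L := isCompact_iff_compactSpace.1 (hC.of_isClosed_subset hLclosed hLC)
  have := Submonoid.isMulCommutative_closure S (s := Set.range A) (by
    rintro _ ⟨i, rfl⟩ _ ⟨j, rfl⟩
    exact hcomm i j)
  let _ : CommMonoid L := Submonoid.commMonoidTopologicalClosure _ fun x y => mul_comm' x y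
  let A' : I → L := fun i =>
    ⟨A i, Submonoid.le_topologicalClosure _ (Submonoid.subset_closure ⟨i, rfl⟩)⟩
  have hA' (i : I) : ∃ N > 0, ∃ P, Tendsto (fun n => A' i ^ (N * n)) atTop (𝓝 P) := by
    obtain ⟨N, hN, P, hP⟩ := hA i
    exact ⟨N, hN, ⟨P, hLclosed.mem_of_tendsto hP (.of_forall fun n => pow_mem (A' i).2 _)⟩,
      tendsto_subtype_rng.2 hP⟩
  have hcoe (w : List I) : wordReward A' (fun i => r i ∘ (↑)) 1 w = wordReward A r 1 w :=
    (wordReward_map L.subtype A' r 1 w).symm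
  simpa only [hcoe] using exists_stream_tendsto_wordReward_div hA' fun i =>
    (hr i).comp continuous_subtype_val

end UniformValue

lemma tendsto_iSup_of_tendsto_of_eventually_le {ι α : Type*} {l : Filter ι} {F : α → ι → ℝ}
    {a : α} {v : ℝ} (ha : Tendsto (F a) l (𝓝 v))
    (hle : ∀ ε > 0, ∀ᶠ n in l, ∀ a', F a' n ≤ v + ε) :
    Tendsto (fun n => ⨆ a', F a' n) l (𝓝 v) := by
  have : Nonempty α := ⟨a⟩
  refine tendsto_order.2 ⟨fun c hc => ?_, fun c hc => ?_⟩
  · filter_upwards [ha.eventually_const_lt hc, hle 1 one_pos] with n hcn hn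
    exact hcn.trans_le (le_ciSup (f := fun a' => F a' n) ⟨v + 1, Set.forall_mem_range.2 hn⟩ a)
  · filter_upwards [hle ((c - v) / 2) (by linarith)] with n hn
    exact (ciSup_le hn).trans_lt (by linarith)

section StateBlindPOMDP

open Matrix

variable {K I : Type*} [Fintype K]

/-- The transition of the action `i` as a matrix acting on row vectors, so that
`q̃(p, i) = p ᵥ* transitionMatrix q i`. -/
def transitionMatrix {K I : Type*} (q : K → I → K → ℝ) (i : I) : Matrix K K ℝ :=
  of fun k k' => q k i k'

lemma transitionMatrix_mem_rowStochastic [DecidableEq K] {q : K → I → K → ℝ}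
    (hq : ∀ k i, q k i ∈ stdSimplex ℝ K) (i : I) : transitionMatrix q i ∈ rowStochastic ℝ K :=
  mem_rowStochastic_iff_sum.2 ⟨fun k => (hq k i).1, fun k => (hq k i).2⟩

lemma commute_transitionMatrix {q : K → I → K → ℝ}
    (hcomm : ∀ (k : K) (i i' : I), qTilde1 q (q k i) i' = qTilde1 q (q k i') i) (i j : I) :
    Commute (transitionMatrix q i) (transitionMatrix q j) :=
  Matrix.ext fun k k' => congrFun (hcomm k i j) k'

lemma beliefPlay_eq_vecMul_prod [DecidableEq K] (q : K → I → K → ℝ) (p₁ : K → ℝ)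
    (a : Stream' I) (t : ℕ) :
    beliefPlay q p₁ a t = p₁ ᵥ* ((a.take t).map (transitionMatrix q)).prod := by
  induction t with
  | zero => simp [beliefPlay]
  | succ t ih =>
    rw [Stream'.take_succ', List.map_append, List.prod_append, ← vecMul_vecMul, ← ih]
    simp only [List.map_cons, List.map_nil, List.prod_singleton]
    rfl

lemma pomdpPayoff_eq_wordReward_div [DecidableEq K] (q : K → I → K → ℝ) (g : K → I → ℝ)
    (p₁ : K → ℝ) (a : Stream' I) (n : ℕ) : pomdpPayoff q g p₁ a n =
      wordReward (transitionMatrix q) (fun i T => p₁ ᵥ* T ⬝ᵥ fun k => g k i) 1 (a.take n) / n := by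
  simp only [pomdpPayoff, wordReward_take, one_mul, beliefPlay_eq_vecMul_prod, one_div,
    inv_mul_eq_div, dotProduct, Stream'.get]

theorem commutative_state_blind_pomdp_has_pure_zero_optimal_general
    {K I : Type*} [Fintype K] [Finite I] [Nonempty I]
    (q : K → I → K → ℝ) (hq : ∀ k i, q k i ∈ stdSimplex ℝ K) (g : K → I → ℝ)
    (hcomm : ∀ (k : K) (i i' : I), qTilde1 q (q k i) i' = qTilde1 q (q k i') i) (p₁ : K → ℝ) :
    ∃ (v : ℝ) (a : ℕ → I),
      Tendsto (fun n => pomdpPayoff q g p₁ a n) atTop (𝓝 v) ∧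
      Tendsto (fun n => ⨆ a' : ℕ → I, pomdpPayoff q g p₁ a' n) atTop (𝓝 v) := by
  classical
  have hstoch := transitionMatrix_mem_rowStochastic hq
  obtain ⟨v, a, ha, hle⟩ := exists_stream_tendsto_wordReward_div_of_commute isCompact_rowStochastic
    hstoch (commute_transitionMatrix hcomm)
    (fun i => exists_tendsto_pow_mul_of_mem_rowStochastic (hstoch i))
    (r := fun i T => p₁ ᵥ* T ⬝ᵥ fun k => g k i)
    (fun i => (continuous_const.matrix_vecMul continuous_id).dotProduct continuous_const)
  have hlim : Tendsto (fun n => pomdpPayoff q g p₁ a n) atTop (𝓝 v) :=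
    ha.congr fun n => (pomdpPayoff_eq_wordReward_div q g p₁ a n).symm
  refine ⟨v, a, hlim, tendsto_iSup_of_tendsto_of_eventually_le hlim fun ε hε => ?_⟩
  filter_upwards [hle ε hε] with n hn a'
  exact (pomdpPayoff_eq_wordReward_div q g p₁ a' n).trans_le (hn _ (Stream'.length_take ..))

end StateBlindPOMDP

/-- A commutative state-blind POMDP with finite sets of states and actions has a uniform value
from every initial probability, and there is a pure `0`-optimal strategy. -/
theorem commutative_state_blind_pomdp_has_pure_zero_optimal
    {K I : Type*} [Fintype K] [Nonempty K] [Fintype I] [Nonempty I]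
    (q : K → I → K → ℝ) (hq : ∀ k i, q k i ∈ stdSimplex ℝ K)
    (g : K → I → ℝ) (hg01 : ∀ k i, g k i ∈ Set.Icc (0 : ℝ) 1)
    (hcomm : ∀ (k : K) (i i' : I), qTilde1 q (q k i) i' = qTilde1 q (q k i') i)
    (p₁ : K → ℝ) (hp₁ : p₁ ∈ stdSimplex ℝ K) :
    ∃ (v : ℝ) (a : ℕ → I),
      Tendsto (fun n => pomdpPayoff q g p₁ a n) atTop (𝓝 v) ∧
      limsup (fun n => ⨆ a' : ℕ → I, pomdpPayoff q g p₁ a' n) atTop ≤ v :=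
  let ⟨v, a, ha, hsup⟩ :=
    commutative_state_blind_pomdp_has_pure_zero_optimal_general q hq g hcomm p₁
  ⟨v, a, ha, hsup.limsup_eq.le⟩
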